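/- arXiv:1308.5517 — 2 statements merged into one kernel-verified Lean document; each statement's English description precedes it below -/
import Mathlib

section
/- Let K be a local class, over a locally finite relational signature, every member of which satisfies the Symmetry schema; let F be the Fraïssé limit of K with underlying set V. Let G be a finite group, H ⊆ G a subgroup, and S ⊂ V a finite subset. Suppose ρ is a left action of H on F↾S by automorphisms with trivial stabilizers. Then there is a finite subset S' ⊂ V with S ⊆ S' and an action ρ' of G on F↾S' by automorphisms with trivial stabilizers whose restriction to H × F↾S coincides with ρ. -/
/-!
The idea is to induce the `H`-structure `P = F↾S` up to `G`: the balanced product `G ×_H P` is a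
disjoint union of copies `g • P` of `P`, one for each coset `gH`, with no relation holding across
different copies. A local sentence only constrains tuples on which some relation holds, and such a
tuple lies inside a single copy of `P`; hence `G ×_H P` satisfies every local sentence true in `P`
and so embeds in `F`. By ultrahomogeneity the embedding can be chosen to be the identity on the
copy `1 • P`, and the action of `G` on `G ×_H P` is then carried over to the image. An element of
`G` fixing the class of `(g, p)` is the conjugate by `g` of an element of `H` fixing `p`.
-/

open FirstOrder FirstOrder.Language

universe u v

/-- A finite structure for a relational signature `L`, with underlying set a finite subset of `ℕ`,
given by its relation interpretations (sets of tuples of natural numbers). -/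
structure FinStruc (L : FirstOrder.Language.{u, v}) where
  carrier : Finset ℕ
  rel : ∀ ⦃n : ℕ⦄, L.Relations n → Set (Fin n → ℕ)
  rel_mem : ∀ ⦃n : ℕ⦄ (R : L.Relations n) (t : Fin n → ℕ), t ∈ rel R → ∀ i, t i ∈ carrier

variable {L : FirstOrder.Language.{u, v}}

/-- The first-order structure on the underlying set of a `FinStruc`. -/
instance FinStruc.str [L.IsRelational] (A : FinStruc L) :
    L.Structure {x : ℕ // x ∈ A.carrier} where
  funMap := fun f _ => isEmptyElim f
  RelMap := fun {n} R t => (fun i => (t i : ℕ)) ∈ A.rel R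

/-- Satisfaction of a sentence in a `FinStruc`. -/
def FinStruc.Sat [L.IsRelational] (A : FinStruc L) (φ : L.Sentence) : Prop :=
  {x : ℕ // x ∈ A.carrier} ⊨ φ

/-- The General Irreflexivity axiom for a relation symbol `R` and coordinates `i`, `j`:
`∀ x₁ … xₙ, R (x₁, …, xₙ) → ¬ (xᵢ = xⱼ)`. -/
def giSentence {n : ℕ} (R : L.Relations n) (i j : Fin n) : L.Sentence :=
  BoundedFormula.alls
    ((Relations.boundedFormula R fun k => Term.var (Sum.inr k)).imp
      (Term.bdEqual (Term.var (Sum.inr i)) (Term.var (Sum.inr j))).not)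

/-- The General Irreflexivity axiom schema `Φ^Σ_GI`. -/
def GITheory (L : FirstOrder.Language.{u, v}) : L.Theory :=
  { φ | ∃ (n : ℕ) (R : L.Relations n) (i j : Fin n), i ≠ j ∧ φ = giSentence R i j }

/-- A sentence is local if it has the form `∀ x₁ … xₘ, R (x₁, …, xₘ) → ψ` with `m > 0` and
`ψ` quantifier-free. -/
def IsLocalSentence (φ : L.Sentence) : Prop :=
  ∃ m : ℕ, 0 < m ∧ ∃ (R : L.Relations m) (ψ : L.BoundedFormula Empty m), ψ.IsQF ∧
    φ = BoundedFormula.alls ((Relations.boundedFormula R fun k => Term.var (Sum.inr k)).imp ψ)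

/-- A class of finite structures is local if it is the class of models of a set of local
sentences containing the General Irreflexivity axioms. -/
def IsLocalClass [L.IsRelational] (K : Set (FinStruc L)) : Prop :=
  ∃ Φ : L.Theory, (∀ φ ∈ Φ, IsLocalSentence φ) ∧ GITheory L ⊆ Φ ∧
    K = { A : FinStruc L | ∀ φ ∈ Φ, A.Sat φ }

/-- The `n`-frame of a structure: same underlying set, same interpretations of relation symbols
of arity at most `n`, empty interpretation of all higher-arity relation symbols. -/
def FinStruc.frame (A : FinStruc L) (n : ℕ) : FinStruc L where
  carrier := A.carrier
  rel := fun m R => if m ≤ n then A.rel R else ∅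
  rel_mem := by
    intro m R t ht i
    by_cases h : m ≤ n
    · exact A.rel_mem R t (by simpa [h] using ht) i
    · simp [h] at ht

/-- The induced substructure of `B` on a finite set `X`. -/
def FinStruc.restrict (B : FinStruc L) (X : Finset ℕ) : FinStruc L where
  carrier := B.carrier ∩ X
  rel := fun _ R => { t | t ∈ B.rel R ∧ ∀ i, t i ∈ X }
  rel_mem := fun _ R t ht i => Finset.mem_inter.2 ⟨B.rel_mem R t ht.1 i, ht.2 i⟩

/-- `A` is the induced substructure of `B` on the subset `A.carrier` of `B.carrier`. -/
def FinStruc.IsInducedSub (A B : FinStruc L) : Prop :=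
  A.carrier ⊆ B.carrier ∧
    ∀ ⦃n : ℕ⦄ (R : L.Relations n) (t : Fin n → ℕ),
      (∀ i, t i ∈ A.carrier) → (t ∈ A.rel R ↔ t ∈ B.rel R)

/-- `A` is isomorphic to `B`: there is a bijection of the underlying sets preserving all
relations in both directions. -/
def FinStruc.IsIsoTo (A B : FinStruc L) : Prop :=
  ∃ f : ℕ → ℕ, Set.BijOn f ↑A.carrier ↑B.carrier ∧
    ∀ ⦃n : ℕ⦄ (R : L.Relations n) (t : Fin n → ℕ), (∀ i, t i ∈ A.carrier) →
      (t ∈ A.rel R ↔ (fun i => f (t i)) ∈ B.rel R)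

/-- The Adoptive Property. -/
def AdoptiveProperty (K : Set (FinStruc L)) : Prop :=
  ∀ (n : ℕ) (B A A' : FinStruc L), B ∈ K → A ∈ K → A' ∈ K →
    A.IsInducedSub B → A.carrier.card = n → A'.carrier = A.carrier →
    A'.frame (n - 1) = A.frame (n - 1) →
    ∃ B' ∈ K, B'.carrier = B.carrier ∧ B'.frame (n - 1) = B.frame (n - 1) ∧
      ∀ R : L.Relations n,
        B'.rel R = (B.rel R \ { t | ∀ i, t i ∈ A.carrier }) ∪ A'.rel R

/-- A structure for `L` with underlying set `ℕ`, given by its relation interpretations. -/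
structure InfStruc (L : FirstOrder.Language.{u, v}) where
  rel : ∀ ⦃n : ℕ⦄, L.Relations n → Set (Fin n → ℕ)

/-- The first-order structure on `ℕ` determined by an `InfStruc`. -/
def InfStruc.str [L.IsRelational] (M : InfStruc L) : L.Structure ℕ where
  funMap := fun f _ => isEmptyElim f
  RelMap := fun {n} R t => t ∈ M.rel R

/-- Satisfaction of a sentence in an `InfStruc`. -/
def InfStruc.Sat [L.IsRelational] (M : InfStruc L) (φ : L.Sentence) : Prop :=
  @FirstOrder.Language.Sentence.Realize L ℕ M.str φ

/-- The induced finite substructure of an `InfStruc` on a finite set `X`. -/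
def InfStruc.restrict (M : InfStruc L) (X : Finset ℕ) : FinStruc L where
  carrier := X
  rel := fun _ R => { t | t ∈ M.rel R ∧ ∀ i, t i ∈ X }
  rel_mem := fun _ _ _ ht i => ht.2 i

/-- The bundled structures isomorphic to a member of `K`. -/
def toBundled (L : FirstOrder.Language.{u, v}) [L.IsRelational] (K : Set (FinStruc L)) :
    Set (CategoryTheory.Bundled.{0} L.Structure) :=
  { M | ∃ A ∈ K, Nonempty (M ≃[L] {x : ℕ // x ∈ A.carrier}) }

/-- `K^{X,l}_{A,k}`: the set of `l`-frames of members `B` of `K` with underlying set `X` whose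
`k`-frame restricted to the underlying set of `A` is the `k`-frame of `A`. -/
def KsetFr (K : Set (FinStruc L)) (X : Finset ℕ) (l : ℕ) (A : FinStruc L) (k : ℕ) :
    Set (FinStruc L) :=
  { F | ∃ B ∈ K, B.carrier = X ∧ (B.frame k).restrict A.carrier = A.frame k ∧ F = B.frame l }

/-- `N(S,k)`: the number of distinct `(k+1)`-frames of members of `K` on the underlying set of `S`
whose `k`-frame is the `k`-frame of `S`. -/
noncomputable def Ncount (K : Set (FinStruc L)) (S : FinStruc L) (k : ℕ) : ℕ :=
  (KsetFr K S.carrier (k + 1) S k).ncard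

/-- Every member of `K` satisfies the Symmetry schema: each relation is invariant under all
permutations of its arguments. -/
def SymmetricClass (K : Set (FinStruc L)) : Prop :=
  ∀ A ∈ K, ∀ ⦃n : ℕ⦄ (R : L.Relations n) (σ : _root_.Equiv.Perm (Fin n)) (t : Fin n → ℕ),
    t ∈ A.rel R → (t ∘ σ) ∈ A.rel R

/-- `ρ` is a left action of the group `H` on the induced substructure of `F` on the subset `S`,
by automorphisms of that substructure. -/
def ActsOn (L : FirstOrder.Language.{u, v}) (F : Type*) [L.Structure F] (H : Type*) [Group H]
    (ρ : H → F → F) (S : Set F) : Prop :=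
  (∀ h : H, Set.BijOn (ρ h) S S) ∧
  (∀ x ∈ S, ρ 1 x = x) ∧
  (∀ g h : H, ∀ x ∈ S, ρ (g * h) x = ρ g (ρ h x)) ∧
  (∀ h : H, ∀ ⦃n : ℕ⦄ (R : L.Relations n) (t : Fin n → F), (∀ i, t i ∈ S) →
    (Structure.RelMap R t ↔ Structure.RelMap R fun i => ρ h (t i)))

section LocalClass

open Structure

/-- `N` is covered by copies of `M` if every tuple of `N` on which a relation holds lies in the
image of an embedding of `M`. This is what it takes for local sentences to pass from `M` to `N`. -/
def CoveredByCopies (L : FirstOrder.Language.{u, v}) (M N : Type*) [L.Structure M]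
    [L.Structure N] : Prop :=
  ∀ ⦃n : ℕ⦄ (R : L.Relations n) (t : Fin n → N), RelMap R t →
    ∃ (f : M ↪[L] N) (s : Fin n → M), t = f ∘ s

theorem IsLocalSentence.realize_of_coveredByCopies {φ : L.Sentence} (hφ : IsLocalSentence φ)
    {M N : Type*} [L.Structure M] [L.Structure N] (hMN : CoveredByCopies L M N) (hM : M ⊨ φ) :
    N ⊨ φ := by
  obtain ⟨m, -, R, ψ, hψ, rfl⟩ := hφ
  simp only [Sentence.Realize, BoundedFormula.realize_alls, BoundedFormula.realize_imp,
    BoundedFormula.realize_rel, Term.realize_var, Sum.elim_inr] at hM ⊢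
  intro t ht
  obtain ⟨f, s, rfl⟩ := hMN R t ht
  have hs : ψ.Realize default s := hM s ((f.map_rel R s).1 ht)
  rw [← hψ.realize_embedding f] at hs
  rwa [Subsingleton.elim default (f ∘ default)]

variable [L.IsRelational]

/-- The structure obtained from `M` by transport along a bijection onto a finite set of natural
numbers. -/
def FinStruc.ofEquiv (L : FirstOrder.Language.{u, v}) {M : Type*} [L.Structure M] {C : Finset ℕ}
    (e : M ≃ C) : FinStruc L where
  carrier := C
  rel _ R := { t | ∃ s, RelMap R s ∧ (Subtype.val ∘ e) ∘ s = t }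
  rel_mem := by
    rintro n R _ ⟨s, -, rfl⟩ i
    exact (e (s i)).2

theorem FinStruc.nonempty_equiv_ofEquiv {M : Type*} [L.Structure M] {C : Finset ℕ} (e : M ≃ C) :
    Nonempty (M ≃[L] {x : ℕ // x ∈ (FinStruc.ofEquiv L e).carrier}) := by
  have hinj : Function.Injective (Subtype.val ∘ e) := Subtype.val_injective.comp e.injective
  refine ⟨{ toEquiv := e, map_fun' := fun f => isEmptyElim f, map_rel' := fun R t => ?_ }⟩
  change (∃ s, RelMap R s ∧ (Subtype.val ∘ e) ∘ s = (Subtype.val ∘ e) ∘ t) ↔ RelMap R t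
  simp only [hinj.comp_left.eq_iff, exists_eq_right]

theorem FinStruc.exists_equiv (M : Type*) [L.Structure M] [Finite M] :
    ∃ A : FinStruc L, Nonempty (M ≃[L] {x : ℕ // x ∈ A.carrier}) := by
  obtain ⟨n, ⟨e⟩⟩ := Finite.exists_equiv_fin M
  let eFin : Fin n ≃ Finset.range n :=
    Fin.equivSubtype.trans (_root_.Equiv.subtypeEquivRight fun _ => Finset.mem_range.symm)
  exact ⟨_, FinStruc.nonempty_equiv_ofEquiv (e.trans eFin)⟩

theorem IsLocalClass.exists_equiv_of_coveredByCopies {K : Set (FinStruc L)} (hK : IsLocalClass K)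
    {M N : Type*} [L.Structure M] [L.Structure N] [Finite N] (hMN : CoveredByCopies L M N)
    (hM : ∃ A ∈ K, Nonempty (M ≃[L] {x : ℕ // x ∈ A.carrier})) :
    ∃ B ∈ K, Nonempty (N ≃[L] {x : ℕ // x ∈ B.carrier}) := by
  obtain ⟨Φ, hΦ, -, rfl⟩ := hK
  obtain ⟨A, hA, ⟨eA⟩⟩ := hM
  obtain ⟨B, ⟨eB⟩⟩ := FinStruc.exists_equiv (L := L) N
  refine ⟨B, fun φ hφ => ?_, ⟨eB⟩⟩
  have hMφ : M ⊨ φ := (StrongHomClass.realize_sentence eA φ).2 (hA φ hφ)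
  have hNφ : N ⊨ φ := (hΦ φ hφ).realize_of_coveredByCopies hMN hMφ
  exact (StrongHomClass.realize_sentence eB φ).1 hNφ

theorem nonempty_embedding_iff_exists_equiv {K : Set (FinStruc L)} {F : Type} [L.Structure F]
    (hage : L.age F = toBundled L K) (M : Type*) [L.Structure M] [Finite M] :
    Nonempty (M ↪[L] F) ↔ ∃ A ∈ K, Nonempty (M ≃[L] {x : ℕ // x ∈ A.carrier}) := by
  constructor
  · rintro ⟨f⟩
    have : Finite f.toHom.range := Finite.of_equiv M f.equivRange.toEquiv
    have hmem : (⟨f.toHom.range, inferInstance⟩ : CategoryTheory.Bundled L.Structure) ∈ L.age F :=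
      ⟨FG.of_finite, ⟨f.toHom.range.subtype⟩⟩
    rw [hage] at hmem
    obtain ⟨A, hA, ⟨e⟩⟩ := hmem
    exact ⟨A, hA, ⟨e.comp f.equivRange⟩⟩
  · rintro ⟨A, hA, ⟨e⟩⟩
    have hmem : (⟨{x : ℕ // x ∈ A.carrier}, A.str⟩ : CategoryTheory.Bundled L.Structure) ∈
        toBundled L K :=
      ⟨A, hA, ⟨Language.Equiv.refl L _⟩⟩
    rw [← hage] at hmem
    obtain ⟨-, ⟨f⟩⟩ := hmem
    exact ⟨f.comp e.toEmbedding⟩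

end LocalClass

section AutomorphismAction

open Structure

/-- `G` acts on the structure `M` by automorphisms. Only the relations are mentioned, so this is
the right notion for relational signatures; for a group, preservation of the relations in one
direction gives the other. -/
class ActsByAutomorphisms (L : FirstOrder.Language.{u, v}) (G M : Type*) [L.Structure M]
    [SMul G M] : Prop where
  relMap_smul (g : G) ⦃n : ℕ⦄ (R : L.Relations n) (t : Fin n → M) :
    RelMap R t → RelMap R (g • t)

theorem ActsByAutomorphisms.relMap_smul_iff {G M : Type*} [L.Structure M] [Group G] [MulAction G M]
    [ActsByAutomorphisms L G M] (g : G) {n : ℕ} (R : L.Relations n) (t : Fin n → M) :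
    RelMap R (g • t) ↔ RelMap R t := by
  refine ⟨fun h => ?_, relMap_smul g R t⟩
  simpa only [inv_smul_smul] using relMap_smul g⁻¹ R (g • t) h

end AutomorphismAction

section InducedSpace

open Structure

variable {G : Type*} [Group G] (H : Subgroup G) (P : Type*) [MulAction H P]

/-- The relation on `G × P` identifying `(g * h, p)` with `(g, h • p)` for `h` in `H`. -/
def inducedSetoid : Setoid (G × P) where
  r a b := ∃ h : H, a.1 = b.1 * h ∧ h • a.2 = b.2
  iseqv :=
    { refl := fun _ => ⟨1, by simp⟩
      symm := fun ⟨h, hg, hp⟩ => ⟨h⁻¹, by simp [hg], by simp [← hp]⟩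
      trans := fun ⟨h, hg, hp⟩ ⟨k, hg', hp'⟩ =>
        ⟨k * h, by simp [hg, hg', mul_assoc], by simp [← hp, ← hp', mul_smul]⟩ }

/-- The balanced product `G ×_H P`: the `G`-set induced by the `H`-set `P`. -/
def InducedSpace : Type _ := Quotient (inducedSetoid H P)

namespace InducedSpace

variable {H P}

/-- The class of `(g, p)` in `G ×_H P`, which stands for the point `g • p` of the copy `g • P`. -/
def mk (H : Subgroup G) {P : Type*} [MulAction H P] (g : G) (p : P) : InducedSpace H P :=
  Quotient.mk (inducedSetoid H P) (g, p)

@[elab_as_elim]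
protected theorem ind {motive : InducedSpace H P → Prop} (mk : ∀ g p, motive (mk H g p))
    (x : InducedSpace H P) : motive x :=
  Quotient.ind (fun a => mk a.1 a.2) x

theorem mk_eq_mk_iff {g g' : G} {p p' : P} :
    mk H g p = mk H g' p' ↔ ∃ h : H, g = g' * h ∧ h • p = p' :=
  Quotient.eq

theorem mk_mul (g : G) (h : H) (p : P) : mk H (g * h) p = mk H g (h • p) :=
  mk_eq_mk_iff.2 ⟨h, rfl, rfl⟩

theorem mk_injective (g : G) : Function.Injective (mk H g : P → InducedSpace H P) := by
  intro p p' hp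
  obtain ⟨h, hg, rfl⟩ := mk_eq_mk_iff.1 hp
  obtain rfl : h = 1 := by simpa using hg
  exact (one_smul H p).symm

instance : MulAction G (InducedSpace H P) where
  smul k := Quotient.map (fun a => (k * a.1, a.2)) fun _ _ ⟨h, hg, hp⟩ =>
    ⟨h, by simp only [hg, mul_assoc], hp⟩
  one_smul := InducedSpace.ind fun g p => congrArg (mk H · p) (one_mul g)
  mul_smul k l := InducedSpace.ind fun g p => congrArg (mk H · p) (mul_assoc k l g)

theorem smul_mk (k g : G) (p : P) : k • mk H g p = mk H (k * g) p := rfl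

theorem coe_smul_mk_one (h : H) (p : P) : (h : G) • mk H 1 p = mk H 1 (h • p) := by
  rw [smul_mk, mul_one, ← mk_mul, one_mul]

theorem smul_mk_eq_self_iff {k g : G} {p : P} :
    k • mk H g p = mk H g p ↔ ∃ h : H, k * g = g * h ∧ h • p = p :=
  mk_eq_mk_iff

theorem eq_one_of_smul_eq_self (hfree : ∀ (h : H) (p : P), h • p = p → h = 1) (k : G)
    (x : InducedSpace H P) (hx : k • x = x) : k = 1 := by
  induction x using InducedSpace.ind with
  | mk g p =>
    obtain ⟨h, hk, hp⟩ := smul_mk_eq_self_iff.1 hx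
    simpa [hfree h p hp] using hk

instance [H.FiniteIndex] [Finite P] : Finite (InducedSpace H P) := by
  refine Finite.of_surjective (fun a : (G ⧸ H) × P => mk H a.1.out a.2) ?_
  refine InducedSpace.ind fun g p => ?_
  obtain ⟨h, hh⟩ := QuotientGroup.mk_out_eq_mul H g
  exact ⟨(g, h⁻¹ • p), by simp only [hh, mk_mul, smul_inv_smul]⟩

variable [L.IsRelational] [L.Structure P]

instance : L.Structure (InducedSpace H P) where
  funMap f := isEmptyElim f
  RelMap R t := ∃ g s, RelMap R s ∧ mk H g ∘ s = t

instance : ActsByAutomorphisms L G (InducedSpace H P) where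
  relMap_smul := by
    rintro k n R _ ⟨g, s, hs, rfl⟩
    exact ⟨k * g, s, hs, rfl⟩

variable [ActsByAutomorphisms L H P]

theorem relMap_mk_comp_iff (g : G) {n : ℕ} (R : L.Relations n) (t : Fin n → P) :
    RelMap R (mk H g ∘ t) ↔ RelMap R t := by
  refine ⟨?_, fun ht => ⟨g, t, ht, rfl⟩⟩
  rintro ⟨g', s, hs, hst⟩
  rcases isEmpty_or_nonempty (Fin n) with _ | ⟨⟨i⟩⟩
  · rwa [Subsingleton.elim t s]
  · -- Any coordinate shows that `g` and `g'` lie in the same coset.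
    obtain ⟨h, rfl, -⟩ := mk_eq_mk_iff.1 (congrFun hst i)
    have hts : h • s = t := by
      funext j
      exact mk_injective g ((mk_mul g h (s j)).symm.trans (congrFun hst j))
    exact hts ▸ ActsByAutomorphisms.relMap_smul h R s hs

/-- The embedding of `P` onto the copy `g • P` in `G ×_H P`. -/
def mkEmbedding (L : FirstOrder.Language.{u, v}) [L.IsRelational] (H : Subgroup G) (P : Type*)
    [MulAction H P] [L.Structure P] [ActsByAutomorphisms L H P] (g : G) :
    P ↪[L] InducedSpace H P where
  toFun := mk H g
  inj' := mk_injective g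
  map_fun' f := isEmptyElim f
  map_rel' := relMap_mk_comp_iff g

variable (L H P) in
theorem coveredByCopies : CoveredByCopies L P (InducedSpace H P) := by
  rintro n R _ ⟨g, s, -, rfl⟩
  exact ⟨mkEmbedding L H P g, s, rfl⟩

end InducedSpace

end InducedSpace

section Transport

open Structure

variable {F : Type*} [L.Structure F] {G : Type*} [Group G]

/-- The action on the elements of a substructure described by `ActsOn`. -/
abbrev ActsOn.mulAction {ρ : G → F → F} {P : L.Substructure F} (hρ : ActsOn L F G ρ P) :
    MulAction G P where
  smul g p := ⟨ρ g p, (hρ.1 g).mapsTo p.2⟩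
  one_smul p := Subtype.ext (hρ.2.1 p p.2)
  mul_smul g h p := Subtype.ext (hρ.2.2.1 g h p p.2)

theorem ActsOn.actsByAutomorphisms {ρ : G → F → F} {P : L.Substructure F}
    (hρ : ActsOn L F G ρ P) :
    letI := hρ.mulAction
    ActsByAutomorphisms L G P :=
  letI := hρ.mulAction
  ⟨fun g _ R t => (hρ.2.2.2 g R (fun i => t i) fun i => (t i).2).1⟩

/-- The action of `G` on `M` carried over to the range of `e : M → F`, each `g` being continued
by the identity outside of that range. -/
noncomputable def extendAction (G : Type*) {M F : Type*} [SMul G M] (e : M → F) (g : G) : F → F :=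
  Function.extend e (fun m => e (g • m)) id

theorem extendAction_apply {G M F : Type*} [SMul G M] {e : M → F} (he : Function.Injective e)
    (g : G) (m : M) : extendAction G e g (e m) = e (g • m) :=
  he.extend_apply _ _ m

theorem actsOn_extendAction {M : Type*} [L.Structure M] [MulAction G M]
    [ActsByAutomorphisms L G M] (e : M ↪[L] F) :
    ActsOn L F G (extendAction G e) (Set.range e) := by
  have happly := extendAction_apply (G := G) e.injective
  refine ⟨fun g => ⟨?_, ?_, ?_⟩, ?_, ?_, ?_⟩
  · rintro _ ⟨m, rfl⟩
    exact ⟨g • m, (happly g m).symm⟩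
  · rintro _ ⟨m, rfl⟩ _ ⟨m', rfl⟩ h
    rw [happly, happly, e.injective.eq_iff, smul_left_cancel_iff] at h
    rw [h]
  · rintro _ ⟨m, rfl⟩
    exact ⟨e (g⁻¹ • m), ⟨_, rfl⟩, by rw [happly, smul_inv_smul]⟩
  · rintro _ ⟨m, rfl⟩
    rw [happly, one_smul]
  · rintro g h _ ⟨m, rfl⟩
    rw [happly, happly, happly, mul_smul]
  · intro g n R t ht
    choose s hs using ht
    obtain rfl : e ∘ s = t := funext hs
    have hgs : (fun i => extendAction G e g ((e ∘ s) i)) = e ∘ (g • s) :=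
      funext fun i => happly g (s i)
    rw [hgs, e.map_rel, e.map_rel, ActsByAutomorphisms.relMap_smul_iff]

end Transport

theorem exists_inducedSpace_embedding [L.IsRelational] {K : Set (FinStruc L)}
    (hK : IsLocalClass K) {F : Type} [L.Structure F] (hage : L.age F = toBundled L K)
    (hF : L.IsUltrahomogeneous F) {G : Type*} [Group G] (H : Subgroup G) [H.FiniteIndex]
    (P : L.Substructure F) [Finite P] [MulAction H P] [ActsByAutomorphisms L H P] :
    ∃ e : InducedSpace H P ↪[L] F, ∀ p : P, e (InducedSpace.mk H 1 p) = p := by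
  have hP := (nonempty_embedding_iff_exists_equiv hage P).1 ⟨P.subtype⟩
  have hInd : Nonempty (InducedSpace H P ↪[L] F) :=
    (nonempty_embedding_iff_exists_equiv hage _).2
      (hK.exists_equiv_of_coveredByCopies (InducedSpace.coveredByCopies L H P) hP)
  obtain ⟨e, he⟩ := hF.extend_embedding Structure.FG.of_finite P.subtype
    (InducedSpace.mkEmbedding L H P 1)
  exact ⟨e, fun p => (DFunLike.congr_fun he p).symm⟩

theorem statement_15_general [L.IsRelational] {K : Set (FinStruc L)} (hK : IsLocalClass K)
    {F : Type} [L.Structure F] (hage : L.age F = toBundled L K) (hF : L.IsUltrahomogeneous F)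
    {G : Type*} [Group G] (H : Subgroup G) [H.FiniteIndex] {S : Set F} (hS : S.Finite)
    {ρ : H → F → F} (hρ : ActsOn L F H ρ S) :
    ∃ S' : Set F, S'.Finite ∧ S ⊆ S' ∧
      ∃ ρ' : G → F → F, ActsOn L F G ρ' S' ∧
        (∀ h : H, ∀ x ∈ S, ρ' (h : G) x = ρ h x) ∧
        ((∀ h : H, ∀ x ∈ S, ρ h x = x → h = 1) → ∀ g : G, ∀ x ∈ S', ρ' g x = x → g = 1) := by
  obtain ⟨P, rfl⟩ : ∃ P : L.Substructure F, P = S :=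
    ⟨Substructure.closure L S, Substructure.closure_eq_of_isRelational L S⟩
  have : Finite P := hS
  let := hρ.mulAction
  have := hρ.actsByAutomorphisms
  obtain ⟨e, he⟩ := exists_inducedSpace_embedding hK hage hF H P
  refine ⟨Set.range e, Set.finite_range e, fun x hx => ⟨_, he ⟨x, hx⟩⟩, extendAction G e,
    actsOn_extendAction e, fun h x hx => ?_, ?_⟩
  · calc extendAction G e h x
      _ = extendAction G e h (e (InducedSpace.mk H 1 ⟨x, hx⟩)) := by rw [he]
      _ = e (InducedSpace.mk H 1 (h • (⟨x, hx⟩ : P))) := by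
        rw [extendAction_apply e.injective, InducedSpace.coe_smul_mk_one]
      _ = ρ h x := he _
  · rintro hfree g _ ⟨x, rfl⟩ hx
    rw [extendAction_apply e.injective, e.injective.eq_iff] at hx
    exact InducedSpace.eq_one_of_smul_eq_self
      (fun h (p : P) hp => hfree h p p.2 (congrArg Subtype.val hp)) g x hx

/-- Any action with trivial stabilizers of a subgroup `H` of a finite group `G` on a finite
induced substructure of the Fraïssé limit of a local class with symmetric relations extends to
an action of `G` with trivial stabilizers on a larger finite induced substructure. -/
theorem statement_15 (L : FirstOrder.Language.{u, v}) [L.IsRelational]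
    [∀ n, Finite (L.Relations n)] [Countable (Σ l, L.Functions l)]
    (K : Set (FinStruc L)) (hK : IsLocalClass K) (hsym : SymmetricClass K)
    (F : Type) [L.Structure F] [Countable F] (hF : IsFraisseLimit (toBundled L K) F)
    (G : Type) [Group G] [Finite G] (H : Subgroup G)
    (S : Set F) (hS : S.Finite)
    (ρ : H → F → F) (hρ : ActsOn L F H ρ S)
    (hfree : ∀ h : H, ∀ x ∈ S, ρ h x = x → h = 1) :
    ∃ S' : Set F, S'.Finite ∧ S ⊆ S' ∧
      ∃ ρ' : G → F → F, ActsOn L F G ρ' S' ∧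
        (∀ h : H, ∀ x ∈ S, ρ' (h : G) x = ρ h x) ∧
        (∀ g : G, ∀ x ∈ S', ρ' g x = x → g = 1) := by
  obtain ⟨S', hS', hSS', ρ', hρ', hext, hfree'⟩ :=
    statement_15_general hK hF.age hF.ultrahomogeneous H hS hρ
  exact ⟨S', hS', hSS', ρ', hρ', hext, hfree' hfree⟩
end

section
/- Let K be a local class, over a locally finite relational signature, every member of which satisfies the Symmetry schema, and let F be the Fraïssé limit of K. If G is the direct limit of a sequence of injective homomorphisms of finite groups G_1 ↪ G_2 ↪ G_3 ↪ …, then G has an action on F by automorphisms with trivial stabilizers (i.e., a free action). -/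
open FirstOrder FirstOrder.Language

universe u v

variable {L : FirstOrder.Language.{u, v}}

/-!
A copy of the Fraïssé limit `F` carrying a free action of `G` can be written down as a set of trees.
A tree `⟨A, b, g, s⟩` stands for a point that looks over the points `g • s a`, for `a` in the finite
set `A ⊆ F`, the way `b` looks over `A`; the group acts by left multiplication on the label `g` of
the root, so the action is free. The chart of such a tree sends it to `b` and each `g • s a` to `a`,
and a nonempty tuple is related only if it is so in the chart of one of its entries. The other trees
in a chart have smaller rank than its root, so at most one chart can decide about a given tuple, and
charts of coherent trees are partial isomorphisms into `F`. A local sentence only looks at one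
related tuple, hence at one chart, and therefore passes from `F` to the trees, whose finite
substructures thus embed in `F`. Conversely, every one-point extension of a finite subset of `F` is
realised by a tree. Back and forth identifies the structure of all trees with `F`.
-/

section PartialIso

variable {M N S : Type*} [L.Structure M] [L.Structure N] [L.Structure S]

/-- A partial isomorphism between `M` and `N`, given by its graph `p`, for relational signatures:
it is injective, single-valued, and preserves and reflects all relations. -/
structure IsPartialIso (L : FirstOrder.Language.{u, v}) {M N : Type*} [L.Structure M]
    [L.Structure N] (p : Set (M × N)) : Prop where
  eq_iff : ∀ ⦃x : M⦄ ⦃y : N⦄ ⦃x' : M⦄ ⦃y' : N⦄, (x, y) ∈ p → (x', y') ∈ p → (x = x' ↔ y = y')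
  relMap_iff : ∀ ⦃n : ℕ⦄ (R : L.Relations n) (t : Fin n → M) (w : Fin n → N),
    (∀ i, (t i, w i) ∈ p) → (Structure.RelMap R t ↔ Structure.RelMap R w)

theorem IsPartialIso.mono {p q : Set (M × N)} (hq : IsPartialIso L q) (hpq : p ⊆ q) :
    IsPartialIso L p where
  eq_iff _ _ _ _ h h' := hq.eq_iff (hpq h) (hpq h')
  relMap_iff _ R t w h := hq.relMap_iff R t w fun i => hpq (h i)

theorem isPartialIso_range (f : S ↪[L] M) (g : S ↪[L] N) :
    IsPartialIso L (Set.range fun s => (f s, g s)) where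
  eq_iff := by
    rintro _ _ _ _ ⟨s, ⟨⟩⟩ ⟨s', ⟨⟩⟩
    rw [f.injective.eq_iff, g.injective.eq_iff]
  relMap_iff := by
    intro n R t w h
    choose s hs using h
    obtain rfl : f ∘ s = t := funext fun i => congrArg Prod.fst (hs i)
    obtain rfl : g ∘ s = w := funext fun i => congrArg Prod.snd (hs i)
    rw [f.map_rel, g.map_rel]

theorem IsPartialIso.exists_embedding [L.IsRelational] {p : Set (M × N)} (hp : IsPartialIso L p)
    (T : L.Substructure N) (hT : ∀ y ∈ T, ∃ x, (x, y) ∈ p) :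
    ∃ f : T ↪[L] M, ∀ y : T, (f y, (y : N)) ∈ p := by
  choose f hf using fun y : T => hT y y.2
  refine ⟨⟨⟨f, fun y y' h => Subtype.ext ((hp.eq_iff (hf y) (hf y')).1 h)⟩,
    fun c => isEmptyElim c, fun R w => ?_⟩, hf⟩
  exact hp.relMap_iff R _ _ fun i => hf (w i)

theorem exists_term_eq_var [L.IsRelational] {α : Type*} (t : L.Term α) : ∃ a, t = Term.var a := by
  cases t with
  | var a => exact ⟨a, rfl⟩
  | func f _ => exact isEmptyElim f

theorem IsPartialIso.realize_iff [L.IsRelational] {p : Set (M × N)} (hp : IsPartialIso L p)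
    {α : Type*} {n : ℕ} {ψ : L.BoundedFormula α n} (hψ : ψ.IsQF) {a : α → M} {b : α → N}
    {t : Fin n → M} {w : Fin n → N} (hab : ∀ i, (a i, b i) ∈ p) (htw : ∀ i, (t i, w i) ∈ p) :
    ψ.Realize a t ↔ ψ.Realize b w := by
  have mem_graph (i : α ⊕ Fin n) : (Sum.elim a t i, Sum.elim b w i) ∈ p := by
    cases i with
    | inl i => exact hab i
    | inr i => exact htw i
  induction hψ with
  | falsum => exact Iff.rfl
  | of_isAtomic h =>
    cases h with
    | equal t₁ t₂ =>
      obtain ⟨i, rfl⟩ := exists_term_eq_var t₁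
      obtain ⟨j, rfl⟩ := exists_term_eq_var t₂
      exact hp.eq_iff (mem_graph i) (mem_graph j)
    | rel R ts =>
      choose i hi using fun k => exists_term_eq_var (ts k)
      obtain rfl : ts = fun k => Term.var (i k) := funext hi
      exact hp.relMap_iff R _ _ fun k => mem_graph (i k)
  | imp _ _ ih₁ ih₂ => exact imp_congr ih₁ ih₂

end PartialIso

/-- The copy of a finite structure `N` on the natural numbers below `n`, transported along an
enumeration `e` of `N`. -/
def FinStruc.ofEquivFin {N : Type*} [L.Structure N] {n : ℕ} (e : N ≃ Fin n) : FinStruc L where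
  carrier := Finset.range n
  rel := fun _ R => {t | ∃ s, Structure.RelMap R s ∧ ∀ i, t i = e (s i)}
  rel_mem := by
    rintro _ _ t ⟨s, -, hs⟩ i
    rw [hs i]
    exact Finset.mem_range.2 (e (s i)).2

section Local

variable {M : Type*} [L.Structure M]

theorem realize_alls_boundedFormula_imp {m : ℕ} (R : L.Relations m)
    (ψ : L.BoundedFormula Empty m) :
    M ⊨ (BoundedFormula.alls
      ((Relations.boundedFormula R fun k => Term.var (Sum.inr k)).imp ψ) : L.Sentence) ↔
    ∀ t : Fin m → M, Structure.RelMap R t → ψ.Realize default t := by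
  refine BoundedFormula.realize_alls.trans ?_
  simp [BoundedFormula.realize_imp, BoundedFormula.realize_rel]

variable [L.IsRelational]

theorem IsLocalSentence.realize_of_forall_exists {φ : L.Sentence} (hφ : IsLocalSentence φ)
    (h : ∀ (m : ℕ) (R : L.Relations m) (t : Fin m → M), 0 < m → Structure.RelMap R t →
      ∃ (N : Type*) (_ : L.Structure N) (p : Set (M × N)) (w : Fin m → N),
        N ⊨ φ ∧ IsPartialIso L p ∧ ∀ i, (t i, w i) ∈ p) :
    M ⊨ φ := by
  obtain ⟨m, hm, R, ψ, hψ, rfl⟩ := hφ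
  refine (realize_alls_boundedFormula_imp R ψ).2 fun t ht => ?_
  obtain ⟨N, _, p, w, hN, hp, htw⟩ := h m R t hm ht
  rw [realize_alls_boundedFormula_imp] at hN
  exact (hp.realize_iff hψ (fun i => i.elim) htw).2 (hN w ((hp.relMap_iff R t w htw).1 ht))

theorem IsLocalSentence.realize_of_embedding {N : Type*} [L.Structure N] {φ : L.Sentence}
    (hφ : IsLocalSentence φ) (f : M ↪[L] N) (hN : N ⊨ φ) : M ⊨ φ :=
  hφ.realize_of_forall_exists fun _ _ t _ _ =>
    ⟨N, _, _, f ∘ t, hN, isPartialIso_range (Embedding.refl L M) f, fun i => ⟨t i, rfl⟩⟩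

theorem IsLocalSentence.realize_of_forall_fg {φ : L.Sentence} (hφ : IsLocalSentence φ)
    (h : ∀ S : L.Substructure M, S.FG → S ⊨ φ) : M ⊨ φ :=
  hφ.realize_of_forall_exists fun _ _ t _ _ =>
    let S := Substructure.closure L (Set.range t)
    ⟨S, _, _, fun i => ⟨t i, Substructure.subset_closure ⟨i, rfl⟩⟩,
      h S (Substructure.fg_closure (Set.finite_range t)),
      isPartialIso_range S.subtype (Embedding.refl L S), fun i => ⟨⟨t i, _⟩, rfl⟩⟩

theorem exists_finStruc_equiv (N : Type*) [L.Structure N] [Finite N] :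
    ∃ A : FinStruc L, Nonempty (N ≃[L] {x : ℕ // x ∈ A.carrier}) := by
  obtain ⟨n, ⟨e⟩⟩ := Finite.exists_equiv_fin N
  let f : N ≃ {x : ℕ // x ∈ (FinStruc.ofEquivFin (L := L) e).carrier} :=
    e.trans (Fin.equivSubtype.trans (_root_.Equiv.subtypeEquivRight fun _ => Finset.mem_range.symm))
  refine ⟨FinStruc.ofEquivFin e, ⟨⟨f, fun c => isEmptyElim c, fun {m} R t => ?_⟩⟩⟩
  refine ⟨?_, fun h => ⟨t, h, fun _ => rfl⟩⟩
  rintro ⟨s, hs, hst⟩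
  obtain rfl : t = s := funext fun i => e.injective (Fin.ext (hst i))
  exact hs

variable {Φ : L.Theory} {F : Type} [L.Structure F]

theorem nonempty_embedding_of_finite_of_model
    (hF : toBundled L {A : FinStruc L | ∀ φ ∈ Φ, A.Sat φ} ⊆ L.age F)
    (N : Type*) [L.Structure N] [Finite N] [N ⊨ Φ] : Nonempty (N ↪[L] F) := by
  obtain ⟨A, ⟨f⟩⟩ := exists_finStruc_equiv (L := L) N
  have hA : ∀ φ ∈ Φ, A.Sat φ := fun φ hφ =>
    (StrongHomClass.realize_sentence f φ).1 (Φ.realize_sentence_of_mem hφ)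
  obtain ⟨-, ⟨g⟩⟩ := hF (show CategoryTheory.Bundled.mk {x : ℕ // x ∈ A.carrier} ∈ _ from
    ⟨A, hA, ⟨FirstOrder.Language.Equiv.refl L _⟩⟩)
  exact ⟨g.comp f.toEmbedding⟩

theorem model_of_age_subset_toBundled (hΦ : ∀ φ ∈ Φ, IsLocalSentence φ)
    (hF : L.age F ⊆ toBundled L {A : FinStruc L | ∀ φ ∈ Φ, A.Sat φ}) : F ⊨ Φ := by
  refine ⟨fun φ hφ => (hΦ φ hφ).realize_of_forall_fg fun S hS => ?_⟩
  obtain ⟨A, hA, ⟨f⟩⟩ := hF (age.fg_substructure hS)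
  exact (StrongHomClass.realize_sentence f φ).2 (hA φ hφ)

end Local

section ExtensionPair

variable {M N : Type*} [L.Structure M] [L.Structure N]

theorem isExtensionPair_of_forall_fg_nonempty_embedding (hN : L.IsUltrahomogeneous N)
    (h : ∀ S : L.Substructure M, S.FG → Nonempty (S ↪[L] N)) : L.IsExtensionPair M N := by
  rw [isExtensionPair_iff_exists_embedding_closure_singleton_sup]
  intro S hS f m
  exact hN.extend_embedding (S.fg_iff_structure_fg.1 hS) f _
    (h := h _ ((Substructure.fg_closure_singleton m).sup hS))

theorem isExtensionPair_of_exists_isPartialIso [L.IsRelational]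
    (h : ∀ (S : L.Substructure M) (_ : S.FG) (f : S ↪[L] N) (m : M),
      ∃ p : Set (N × M), IsPartialIso L p ∧ (∀ s : S, (f s, (s : M)) ∈ p) ∧ ∃ n, (n, m) ∈ p) :
    L.IsExtensionPair M N := by
  rw [isExtensionPair_iff_exists_embedding_closure_singleton_sup]
  intro S hS f m
  obtain ⟨p, hp, hfp, n, hn⟩ := h S hS f m
  have total : ∀ y ∈ Substructure.closure L {m} ⊔ S, ∃ x, (x, y) ∈ p := by
    intro y hy
    rw [← S.closure_eq, ← Substructure.closure_union,
      Substructure.mem_closure_iff_of_isRelational] at hy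
    rcases hy with rfl | hy
    · exact ⟨n, hn⟩
    · exact ⟨_, hfp ⟨y, hy⟩⟩
  obtain ⟨g, hg⟩ := hp.exists_embedding _ total
  refine ⟨g, Embedding.ext fun s => ?_⟩
  exact (hp.eq_iff (hfp s) (hg (Substructure.inclusion le_sup_right s))).2 rfl

end ExtensionPair

/-- Formal points realising one-point extensions over a structure `F` on which `G` is to act:
`⟨A, b, g, s⟩` stands for a point that looks over the points `g • s a`, for `a ∈ A`, the way `b`
looks over `A`. The group acts on the label `g` by left multiplication. -/
structure FormalPoint (F G : Type*) where
  base : Finset F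
  point : F
  label : G
  child : base → FormalPoint F G

namespace FormalPoint

variable {F G : Type*}

/-- The height of a formal point as a tree. -/
def rank : FormalPoint F G → ℕ
  | ⟨A, _, _, s⟩ => (Finset.univ.sup fun a : A => (s a).rank) + 1

theorem rank_child_lt (x : FormalPoint F G) (a : x.base) : (x.child a).rank < x.rank := by
  obtain ⟨A, b, g, s⟩ := x
  exact Nat.lt_succ_of_le (Finset.le_sup (f := fun a : A => (s a).rank) (Finset.mem_univ a))

/-- The tree underlying a formal point, as a `WType`. -/
def toWType : FormalPoint F G → WType fun c : Finset F × F × G => c.1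
  | ⟨A, b, g, s⟩ => ⟨(A, b, g), fun a => (s a).toWType⟩

theorem toWType_injective : Function.Injective (toWType (F := F) (G := G)) := by
  intro x
  induction x with
  | mk A b g s ih =>
    rintro ⟨A', b', g', s'⟩ h
    simp only [toWType, WType.mk.injEq, Prod.mk.injEq] at h
    obtain ⟨⟨rfl, rfl, rfl⟩, h⟩ := h
    obtain rfl : s = s' := funext fun a => ih a (congrFun (eq_of_heq h) a)
    rfl

instance [Countable F] [Countable G] : Countable (FormalPoint F G) := by
  let := Encodable.ofCountable F
  let := Encodable.ofCountable G
  let (c : Finset F × F × G) : Encodable c.1 := Encodable.ofCountable c.1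
  exact (toWType_injective (F := F) (G := G)).countable

variable [Group G]

instance : MulAction G (FormalPoint F G) where
  smul g x := ⟨x.base, x.point, g * x.label, x.child⟩
  one_smul x := by
    obtain ⟨A, b, h, s⟩ := x
    exact congrArg (FormalPoint.mk A b · s) (one_mul h)
  mul_smul g g' x := congrArg (mk x.base x.point · x.child) (mul_assoc g g' x.label)

theorem eq_one_of_smul_eq_self {g : G} {x : FormalPoint F G} (h : g • x = x) : g = 1 :=
  mul_eq_right.1 (congrArg label h : g * x.label = x.label)

theorem rank_smul (g : G) (x : FormalPoint F G) : (g • x).rank = x.rank := by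
  obtain ⟨A, b, h, s⟩ := x
  rfl

/-- The chart of `F` at the formal point `x = ⟨A, b, g, s⟩`: the graph of the partial map from
formal points to `F` sending `g • s a` to `a` and `x` to `b`. -/
def chart (x : FormalPoint F G) : Set (FormalPoint F G × F) :=
  insert (x, x.point) (Set.range fun a : x.base => (x.label • x.child a, (a : F)))

theorem mem_chart_self (x : FormalPoint F G) : (x, x.point) ∈ x.chart :=
  Set.mem_insert _ _

theorem smul_mem_chart_smul_iff (g : G) {x y : FormalPoint F G} {c : F} :
    (g • y, c) ∈ (g • x).chart ↔ (y, c) ∈ x.chart := by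
  have chart_smul : (g • x).chart =
      insert (g • x, x.point) (Set.range fun a : x.base => (g • x.label • x.child a, (a : F))) := by
    simp only [← mul_smul]
    rfl
  rw [chart_smul]
  simp [chart]

theorem eq_or_rank_lt_of_mem_chart {x y : FormalPoint F G} {c : F} (h : (y, c) ∈ x.chart) :
    y = x ∨ y.rank < x.rank := by
  obtain h | ⟨a, h⟩ := h
  · exact .inl (congrArg Prod.fst h)
  · obtain rfl : x.label • x.child a = y := congrArg Prod.fst h
    exact .inr ((rank_smul _ _).trans_lt (x.rank_child_lt a))

theorem eq_of_mem_chart_of_mem_chart {x y : FormalPoint F G} {c d : F} (hx : (x, c) ∈ y.chart)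
    (hy : (y, d) ∈ x.chart) : x = y := by
  have := eq_or_rank_lt_of_mem_chart hx
  have := eq_or_rank_lt_of_mem_chart hy
  grind

variable [L.Structure F]

/-- The relation `R` holds of the tuple `t` through the chart of some entry `t j` with `v j`.
Tuples of length zero have no entry, and inherit their relations from `F` directly. -/
def RelatedVia {n : ℕ} (v : Fin n → Prop) (R : L.Relations n) (t : Fin n → FormalPoint F G) :
    Prop :=
  ∃ w : Fin n → F, Structure.RelMap R w ∧ (n = 0 ∨ ∃ j, v j ∧ ∀ i, (t i, w i) ∈ (t j).chart)

variable (L) in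
/-- A formal point `⟨A, b, g, s⟩` is coherent if `b` is new over `A` and `s` is an isomorphism of
`A` onto its image for the relations between formal points. As these relations in turn hold
through the charts of coherent points, both notions are defined by a common recursion. -/
def IsCoherent : FormalPoint F G → Prop
  | ⟨A, b, _, s⟩ => b ∉ A ∧ Function.Injective s ∧
      ∀ (n : ℕ) (R : L.Relations n) (a : Fin n → A),
        RelatedVia (fun j => (s (a j)).IsCoherent) R (s ∘ a) ↔
          Structure.RelMap R (fun i => (a i : F))

instance [L.IsRelational] : L.Structure (FormalPoint F G) where
  funMap := fun f _ => isEmptyElim f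
  RelMap := fun R t => RelatedVia (fun j => (t j).IsCoherent L) R t

theorem isCoherent_smul_iff (g : G) (x : FormalPoint F G) :
    (g • x).IsCoherent L ↔ x.IsCoherent L := by
  obtain ⟨A, b, h, s⟩ := x
  exact Iff.rfl

variable [L.IsRelational]

theorem relMap_iff {n : ℕ} (R : L.Relations n) (t : Fin n → FormalPoint F G) :
    Structure.RelMap R t ↔ ∃ w : Fin n → F, Structure.RelMap R w ∧
      (n = 0 ∨ ∃ j, (t j).IsCoherent L ∧ ∀ i, (t i, w i) ∈ (t j).chart) :=
  Iff.rfl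

theorem relMap_smul_iff (g : G) {n : ℕ} (R : L.Relations n) (t : Fin n → FormalPoint F G) :
    Structure.RelMap R (fun i => g • t i) ↔ Structure.RelMap R t := by
  simp only [relMap_iff, isCoherent_smul_iff, smul_mem_chart_smul_iff]

theorem isCoherent_iff (x : FormalPoint F G) :
    x.IsCoherent L ↔ x.point ∉ x.base ∧
      IsPartialIso L (Set.range fun a : x.base => (x.child a, (a : F))) := by
  obtain ⟨A, b, g, s⟩ := x
  refine and_congr_right fun _ =>
    ⟨fun h => ⟨?_, ?_⟩, fun h => ⟨fun a a' haa' => ?_, fun n R a => ?_⟩⟩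
  · rintro _ _ _ _ ⟨a, ⟨⟩⟩ ⟨a', ⟨⟩⟩
    rw [h.1.eq_iff, Subtype.val_inj]
  · intro n R t w htw
    choose a ha using htw
    obtain rfl : s ∘ a = t := funext fun i => congrArg Prod.fst (ha i)
    obtain rfl : (fun i => (a i : F)) = w := funext fun i => congrArg Prod.snd (ha i)
    exact h.2 n R a
  · exact Subtype.ext ((h.eq_iff ⟨a, rfl⟩ ⟨a', rfl⟩).1 haa')
  · exact h.relMap_iff R (s ∘ a) _ fun i => ⟨a i, rfl⟩

namespace IsCoherent

variable {x : FormalPoint F G}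

theorem eq_iff_of_mem_chart (hx : x.IsCoherent L) {y y' : FormalPoint F G} {c c' : F}
    (h : (y, c) ∈ x.chart) (h' : (y', c') ∈ x.chart) : y = y' ↔ c = c' := by
  obtain ⟨hb, hp⟩ := (isCoherent_iff x).1 hx
  have child_ne (a : x.base) : x.label • x.child a ≠ x := fun h =>
    (x.rank_child_lt a).ne (by rw [← rank_smul x.label, h])
  have coe_ne (a : x.base) : (a : F) ≠ x.point := fun h => hb (h ▸ a.2)
  simp only [chart, Set.mem_insert_iff, Set.mem_range, Prod.mk.injEq] at h h'
  obtain ⟨rfl, rfl⟩ | ⟨a, rfl, rfl⟩ := h <;> obtain ⟨rfl, rfl⟩ | ⟨a', rfl, rfl⟩ := h'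
  · simp only
  · exact iff_of_false (child_ne a').symm (coe_ne a').symm
  · exact iff_of_false (child_ne a) (coe_ne a)
  · rw [smul_left_cancel_iff]
    exact hp.eq_iff ⟨a, rfl⟩ ⟨a', rfl⟩

theorem isPartialIso_chart (hx : x.IsCoherent L) : IsPartialIso L x.chart where
  eq_iff _ _ _ _ h h' := hx.eq_iff_of_mem_chart h h'
  relMap_iff := by
    intro n R t w htw
    by_cases hx_mem : ∃ j, t j = x
    · obtain ⟨j, rfl⟩ := hx_mem
      refine ⟨fun ht => ?_, fun hw => (relMap_iff R t).2 ⟨w, hw, .inr ⟨j, hx, htw⟩⟩⟩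
      obtain ⟨w', hw', rfl | ⟨j', -, htw'⟩⟩ := (relMap_iff R t).1 ht
      · exact j.elim0
      -- Both `t j` and the root that relates `t` lie in the chart of the other, so they coincide.
      rw [eq_of_mem_chart_of_mem_chart (htw j') (htw' j)] at htw'
      obtain rfl : w' = w := funext fun i => (hx.eq_iff_of_mem_chart (htw' i) (htw i)).1 rfl
      exact hw'
    · have ht_child (i : Fin n) : ∃ a : x.base, (x.label • x.child a, (a : F)) = (t i, w i) :=
        (htw i).resolve_left fun h => hx_mem ⟨i, congrArg Prod.fst h⟩
      choose a ha using ht_child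
      obtain rfl : (fun i => x.label • x.child (a i)) = t :=
        funext fun i => congrArg Prod.fst (ha i)
      obtain rfl : (fun i => (a i : F)) = w := funext fun i => congrArg Prod.snd (ha i)
      rw [relMap_smul_iff]
      exact ((isCoherent_iff x).1 hx).2.relMap_iff R _ _ fun i => ⟨a i, rfl⟩

end IsCoherent

theorem exists_isPartialIso_of_relMap {n : ℕ} (hn : 0 < n) {R : L.Relations n}
    {t : Fin n → FormalPoint F G} (ht : Structure.RelMap R t) :
    ∃ (p : Set (FormalPoint F G × F)) (w : Fin n → F),
      IsPartialIso L p ∧ ∀ i, (t i, w i) ∈ p := by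
  obtain ⟨w, -, rfl | ⟨j, hj, htw⟩⟩ := (relMap_iff R t).1 ht
  · exact absurd hn (lt_irrefl 0)
  · exact ⟨_, w, hj.isPartialIso_chart, htw⟩

theorem realize_of_isLocalSentence {φ : L.Sentence} (hφ : IsLocalSentence φ) (hF : F ⊨ φ) :
    FormalPoint F G ⊨ φ :=
  hφ.realize_of_forall_exists fun _ _ _ hm ht =>
    let ⟨p, w, hp, htw⟩ := exists_isPartialIso_of_relMap hm ht
    ⟨F, _, p, w, hF, hp, htw⟩

theorem isExtensionPair : L.IsExtensionPair F (FormalPoint F G) := by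
  refine isExtensionPair_of_exists_isPartialIso fun S hS f b => ?_
  by_cases hb : b ∈ S
  · exact ⟨_, isPartialIso_range f S.subtype, fun s => ⟨s, rfl⟩, f ⟨b, hb⟩, ⟨b, hb⟩, rfl⟩
  · have hfin : (S : Set F).Finite := hS.finite
    have mem_S (a : hfin.toFinset) : (a : F) ∈ S := hfin.mem_toFinset.1 a.2
    let x : FormalPoint F G := ⟨hfin.toFinset, b, 1, fun a => f ⟨a, mem_S a⟩⟩
    have hx : x.IsCoherent L := by
      refine (isCoherent_iff x).2 ⟨fun h => hb (mem_S ⟨b, h⟩), ?_⟩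
      refine (isPartialIso_range f S.subtype).mono ?_
      rintro _ ⟨a, rfl⟩
      exact ⟨⟨a, mem_S a⟩, rfl⟩
    refine ⟨x.chart, hx.isPartialIso_chart, fun s => .inr ⟨⟨s, hfin.mem_toFinset.2 s.2⟩, ?_⟩, x, ?_⟩
    · exact congrArg (·, (s : F)) (one_smul G (f s))
    · exact x.mem_chart_self

end FormalPoint

theorem nonempty_equiv_formalPoint [L.IsRelational] {Φ : L.Theory}
    (hΦ : ∀ φ ∈ Φ, IsLocalSentence φ) {F : Type} [L.Structure F] [Countable F]
    (hF : IsFraisseLimit (toBundled L {A : FinStruc L | ∀ φ ∈ Φ, A.Sat φ}) F)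
    (G : Type*) [Group G] [Countable G] : Nonempty (FormalPoint F G ≃[L] F) := by
  have hFΦ : F ⊨ Φ := model_of_age_subset_toBundled hΦ hF.age.subset
  have embed (S : L.Substructure (FormalPoint F G)) (hS : S.FG) : Nonempty (S ↪[L] F) := by
    have : Finite S := hS.finite
    have : S ⊨ Φ := ⟨fun φ hφ => (hΦ φ hφ).realize_of_embedding S.subtype
      (FormalPoint.realize_of_isLocalSentence (hΦ φ hφ) (hFΦ.realize_of_mem φ hφ))⟩
    exact nonempty_embedding_of_finite_of_model hF.age.superset S
  obtain ⟨f₀⟩ := embed ⊥ Substructure.fg_bot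
  obtain ⟨f, -⟩ := equiv_between_cg Structure.cg_of_countable Structure.cg_of_countable
    ⟨⟨⊥, _, f₀.equivRange⟩, Substructure.fg_bot⟩
    (isExtensionPair_of_forall_fg_nonempty_embedding hF.ultrahomogeneous embed)
    FormalPoint.isExtensionPair
  exact ⟨f⟩

theorem statement_17_general [L.IsRelational] {Φ : L.Theory} (hΦ : ∀ φ ∈ Φ, IsLocalSentence φ)
    {F : Type} [L.Structure F] [Countable F]
    (hF : IsFraisseLimit (toBundled L {A : FinStruc L | ∀ φ ∈ Φ, A.Sat φ}) F)
    (G : Type*) [Group G] [Countable G] :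
    ∃ ρ : G → F → F,
      (∀ x : F, ρ 1 x = x) ∧
      (∀ g h : G, ∀ x : F, ρ (g * h) x = ρ g (ρ h x)) ∧
      (∀ g : G, ∀ ⦃n : ℕ⦄ (R : L.Relations n) (t : Fin n → F),
        Structure.RelMap R t ↔ Structure.RelMap R fun i => ρ g (t i)) ∧
      (∀ g : G, ∀ x : F, ρ g x = x → g = 1) := by
  obtain ⟨f⟩ := nonempty_equiv_formalPoint hΦ hF G
  refine ⟨fun g x => f (g • f.symm x), fun x => ?_, fun g h x => ?_, fun g n R t => ?_,
    fun g x h => ?_⟩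
  · simp only [one_smul, f.apply_symm_apply]
  · simp only [f.symm_apply_apply, mul_smul]
  · calc Structure.RelMap R t
      _ ↔ Structure.RelMap R fun i => f.symm (t i) := (f.symm.map_rel R t).symm
      _ ↔ Structure.RelMap R fun i => g • f.symm (t i) := (FormalPoint.relMap_smul_iff g R _).symm
      _ ↔ Structure.RelMap R fun i => f (g • f.symm (t i)) := (f.map_rel R _).symm
  · exact FormalPoint.eq_one_of_smul_eq_self (f.injective (h.trans (f.apply_symm_apply x).symm))

theorem countable_of_forall_exists_mem {G : Type*} [Group G] {Gn : ℕ → Subgroup G}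
    (hfin : ∀ n, (Gn n : Set G).Finite) (hunion : ∀ g : G, ∃ n, g ∈ Gn n) : Countable G := by
  rw [← Set.countable_univ_iff, ← Set.iUnion_eq_univ_iff.2 hunion]
  exact Set.countable_iUnion fun n => (hfin n).countable

/-- Every direct limit of a sequence of injections of finite groups (equivalently, every union
of an increasing chain of finite subgroups) acts on the Fraïssé limit of a local class with
symmetric relations by automorphisms, with trivial stabilizers. -/
theorem statement_17 (L : FirstOrder.Language.{u, v}) [L.IsRelational]
    [∀ n, Finite (L.Relations n)] [Countable (Σ l, L.Functions l)]
    (K : Set (FinStruc L)) (hK : IsLocalClass K) (hsym : SymmetricClass K)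
    (F : Type) [L.Structure F] [Countable F] (hF : IsFraisseLimit (toBundled L K) F)
    (G : Type) [Group G] (Gn : ℕ → Subgroup G)
    (hfin : ∀ n, (Gn n : Set G).Finite)
    (hmono : ∀ n, Gn n ≤ Gn (n + 1))
    (hunion : ∀ g : G, ∃ n, g ∈ Gn n) :
    ∃ ρ : G → F → F,
      (∀ x : F, ρ 1 x = x) ∧
      (∀ g h : G, ∀ x : F, ρ (g * h) x = ρ g (ρ h x)) ∧
      (∀ g : G, ∀ ⦃n : ℕ⦄ (R : L.Relations n) (t : Fin n → F),
        Structure.RelMap R t ↔ Structure.RelMap R fun i => ρ g (t i)) ∧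
      (∀ g : G, ∀ x : F, ρ g x = x → g = 1) := by
  obtain ⟨Φ, hΦ, -, rfl⟩ := hK
  have : Countable G := countable_of_forall_exists_mem hfin hunion
  exact statement_17_general hΦ hF G
end
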